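/- Let S ⊆ I1 with |S| = k (0 ≤ k < K), let P_S denote the orthogonal projection onto the column span of the blocks {A_l : l ∈ S}, let r̃ = (I − P_S)v with v = Σ_{l∈I1∖S} A_l x̃_l, and set r = r̃ + w̃. Assume A_nz has linearly independent columns and A_nz^T r̃ ≠ 0. Then A_nz^T r = A_nz^T r̃, and the greedy selection ratio satisfies ‖A_z^T r‖_{2,∞} / ‖A_nz^T r‖_{2,∞} ≤ ‖A_z^T (A_nz^†)^T‖_{2,∞} + ‖A_z^T w̃‖_{2,∞} / ‖A_nz^T r̃‖_{2,∞}. -/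

import Mathlib

/- Setting: a measurement matrix `A ∈ ℝ^{m×n}` with `n = L·d`, partitioned into `L` column
blocks of size `m×d`; columns are indexed by pairs `(l, j)` (block `l`, position `j`). -/

noncomputable section

open Finset Matrix

/-- Euclidean (ℓ₂) norm of a finitely indexed real vector. -/
def e2norm {ι : Type*} [Fintype ι] (v : ι → ℝ) : ℝ := Real.sqrt (∑ i, v i ^ 2)

/-- Euclidean inner (dot) product of two real vectors. -/
def dotp {ι : Type*} [Fintype ι] (u v : ι → ℝ) : ℝ := ∑ i, u i * v i

/-- The `(l, j)` column of the block matrix `A` (block `l`, position `j` inside the block). -/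
def acol {m L d : ℕ} (A : Matrix (Fin m) (Fin L × Fin d) ℝ) (l : Fin L) (j : Fin d) :
    Fin m → ℝ :=
  fun i => A i (l, j)

/-- `A_lᵀ v` : correlation of the `l`-th block of `A` with a vector `v ∈ ℝ^m`. -/
def blkT {m L d : ℕ} (A : Matrix (Fin m) (Fin L × Fin d) ℝ) (l : Fin L) (v : Fin m → ℝ) :
    Fin d → ℝ :=
  fun j => dotp (acol A l j) v

/-- Spectral norm (largest singular value) `ρ(X)` of a real matrix, as the supremum of
`‖Xu‖₂ / ‖u‖₂` over nonzero `u`. -/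
def specNorm {p q : ℕ} (X : Matrix (Fin p) (Fin q) ℝ) : ℝ :=
  ⨆ u : {u : Fin q → ℝ // u ≠ 0}, e2norm (X *ᵥ u.1) / e2norm u.1

/-- The `d × d` cross-Gram matrix `A_iᵀ A_j` of two blocks of `A`. -/
def bgram {m L d : ℕ} (A : Matrix (Fin m) (Fin L × Fin d) ℝ) (i j : Fin L) :
    Matrix (Fin d) (Fin d) ℝ :=
  fun a b => dotp (acol A i a) (acol A j b)

/-- Block-coherence `μ_B = max_{i ≠ j} (1/d) ρ(A_iᵀ A_j)`. -/
def blockCoh {m L d : ℕ} (A : Matrix (Fin m) (Fin L × Fin d) ℝ) : ℝ :=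
  ⨆ p : {p : Fin L × Fin L // p.1 ≠ p.2},
    (1 / (d : ℝ)) * specNorm (bgram A p.1.1 p.1.2)

/-- Sub-coherence `ν`: the maximum of `|a_iᵀ a_j|` over pairs of distinct columns lying in the
same block of `A`. -/
def subCoh {m L d : ℕ} (A : Matrix (Fin m) (Fin L × Fin d) ℝ) : ℝ :=
  ⨆ t : {t : Fin L × Fin d × Fin d // t.2.1 ≠ t.2.2},
    |dotp (acol A t.1.1 t.1.2.1) (acol A t.1.1 t.1.2.2)|

/-- Mixed `ℓ₂/ℓ∞` norm (block size `d`) of a block-partitioned vector. -/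
def bnorm2inf {σ : Type*} [Fintype σ] {d : ℕ} (z : σ × Fin d → ℝ) : ℝ :=
  ⨆ q : σ, e2norm (fun j => z (q, j))

/-- Induced mixed `ℓ₂/ℓ∞` matrix norm (block size `d`). -/
def bOpNorm {σ τ : Type*} [Fintype σ] [Fintype τ] {d : ℕ}
    (X : Matrix (σ × Fin d) (τ × Fin d) ℝ) : ℝ :=
  ⨆ z : {z : τ × Fin d → ℝ // z ≠ 0}, bnorm2inf (X *ᵥ z.1) / bnorm2inf z.1

/-- `A_nz`: the concatenation of the blocks of `A` indexed by `I1`. -/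
def Anz {m L d : ℕ} (A : Matrix (Fin m) (Fin L × Fin d) ℝ) (I1 : Finset (Fin L)) :
    Matrix (Fin m) ({l : Fin L // l ∈ I1} × Fin d) ℝ :=
  fun i c => A i (c.1.1, c.2)

/-- `A_z`: the concatenation of the blocks of `A` not indexed by `I1`. -/
def Az {m L d : ℕ} (A : Matrix (Fin m) (Fin L × Fin d) ℝ) (I1 : Finset (Fin L)) :
    Matrix (Fin m) ({l : Fin L // l ∉ I1} × Fin d) ℝ :=
  fun i c => A i (c.1.1, c.2)

/-- Moore–Penrose pseudoinverse `X† = (XᵀX)⁻¹ Xᵀ` of a matrix with linearly independent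
columns (for such matrices this closed form is the Moore–Penrose pseudoinverse). -/
def pinvc {m : ℕ} {ι : Type*} [Fintype ι] [DecidableEq ι]
    (X : Matrix (Fin m) ι ℝ) : Matrix ι (Fin m) ℝ :=
  (Xᵀ * X)⁻¹ * Xᵀ

theorem e2norm_nonneg {ι : Type*} [Fintype ι] (v : ι → ℝ) : 0 ≤ e2norm v := Real.sqrt_nonneg _

theorem e2norm_eq {ι : Type*} [Fintype ι] (v : ι → ℝ) : e2norm v = ‖WithLp.toLp 2 v‖ := by
  simp [e2norm, EuclideanSpace.norm_eq]

theorem e2norm_add {ι : Type*} [Fintype ι] (u v : ι → ℝ) :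
    e2norm (fun i => u i + v i) ≤ e2norm u + e2norm v := by
  rw [e2norm_eq, e2norm_eq, e2norm_eq]
  exact norm_add_le (WithLp.toLp 2 u) (WithLp.toLp 2 v)

theorem abs_le_e2norm {ι : Type*} [Fintype ι] (v : ι → ℝ) (i : ι) : |v i| ≤ e2norm v := by
  apply Real.abs_le_sqrt
  exact Finset.single_le_sum (f := fun i => v i ^ 2) (fun i _ => sq_nonneg _) (Finset.mem_univ i)

theorem e2norm_le_sum {ι : Type*} [Fintype ι] (v : ι → ℝ) : e2norm v ≤ ∑ i, |v i| := by
  apply Real.sqrt_le_iff.2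
  refine ⟨Finset.sum_nonneg fun i _ => abs_nonneg _, ?_⟩
  have := Finset.sum_sq_le_sq_sum_of_nonneg (s := Finset.univ) (f := fun i => |v i|)
    (fun i _ => abs_nonneg _)
  simpa using this

section
variable {σ τ : Type*} [Fintype σ] [Fintype τ] {d : ℕ}

theorem bn_nonneg (z : σ × Fin d → ℝ) : 0 ≤ bnorm2inf z :=
  Real.iSup_nonneg fun _ => e2norm_nonneg _

theorem le_bn (z : σ × Fin d → ℝ) (q : σ) : e2norm (fun j => z (q, j)) ≤ bnorm2inf z :=
  le_ciSup (f := fun q => e2norm (fun j => z (q, j))) (Set.finite_range _).bddAbove q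

theorem abs_le_bn (z : σ × Fin d → ℝ) (c : σ × Fin d) : |z c| ≤ bnorm2inf z :=
  (abs_le_e2norm (fun j => z (c.1, j)) c.2).trans (le_bn z c.1)

theorem bn_add (z z' : σ × Fin d → ℝ) : bnorm2inf (z + z') ≤ bnorm2inf z + bnorm2inf z' :=
  Real.iSup_le (fun q => (e2norm_add (fun j => z (q, j)) (fun j => z' (q, j))).trans
    (add_le_add (le_bn z q) (le_bn z' q))) (add_nonneg (bn_nonneg _) (bn_nonneg _))

theorem bn_pos {z : σ × Fin d → ℝ} (hz : z ≠ 0) : 0 < bnorm2inf z := by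
  obtain ⟨c, hc⟩ := Function.ne_iff.1 hz
  exact (abs_pos.2 hc).trans_le (abs_le_bn z c)

theorem bn_le_sum (z : σ × Fin d → ℝ) : bnorm2inf z ≤ ∑ c, |z c| := by
  refine Real.iSup_le (fun q => (e2norm_le_sum _).trans ?_)
    (Finset.sum_nonneg fun i _ => abs_nonneg _)
  rw [Fintype.sum_prod_type]
  exact Finset.single_le_sum (f := fun q => ∑ j, |z (q, j)|)
    (fun i _ => Finset.sum_nonneg fun i _ => abs_nonneg _) (Finset.mem_univ q)

theorem bn_mulVec_le (X : Matrix (σ × Fin d) (τ × Fin d) ℝ) (z : τ × Fin d → ℝ) :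
    bnorm2inf (X *ᵥ z) ≤ (∑ p, ∑ c, |X p c|) * bnorm2inf z := by
  refine (bn_le_sum _).trans ?_
  rw [Finset.sum_mul]
  refine Finset.sum_le_sum fun p _ => ?_
  rw [Finset.sum_mul]
  refine (Finset.abs_sum_le_sum_abs _ _).trans (Finset.sum_le_sum fun c _ => ?_)
  rw [abs_mul]
  exact mul_le_mul_of_nonneg_left (abs_le_bn z c) (abs_nonneg _)

theorem bn_div_le (X : Matrix (σ × Fin d) (τ × Fin d) ℝ) (z : τ × Fin d → ℝ) (hz : z ≠ 0) :
    bnorm2inf (X *ᵥ z) / bnorm2inf z ≤ bOpNorm X := by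
  refine le_ciSup (f := fun z : {z : τ × Fin d → ℝ // z ≠ 0} =>
    bnorm2inf (X *ᵥ z.1) / bnorm2inf z.1) ?_ ⟨z, hz⟩
  refine ⟨∑ p, ∑ c, |X p c|, ?_⟩
  rintro _ ⟨⟨z, hz⟩, rfl⟩
  exact (div_le_iff₀ (bn_pos hz)).2 (bn_mulVec_le X z)
end

theorem pinvc_fix {m : ℕ} {ι : Type*} [Fintype ι] [DecidableEq ι] (X : Matrix (Fin m) ι ℝ)
    (h : LinearIndependent ℝ (fun c : ι => fun i => X i c)) (c : ι → ℝ) :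
    (pinvc X)ᵀ *ᵥ (Xᵀ *ᵥ (X *ᵥ c)) = X *ᵥ c := by
  have hinj : Function.Injective X.mulVec := Matrix.mulVec_injective_iff.2 h
  have hu : IsUnit (Xᵀ * X) := by
    have := (Matrix.PosDef.conjTranspose_mul_self X hinj).isUnit
    simpa [Matrix.conjTranspose_eq_transpose_of_trivial] using this
  have hd : IsUnit (Xᵀ * X).det := (Matrix.isUnit_iff_isUnit_det _).1 hu
  have e : (pinvc X)ᵀ = X * (Xᵀ * X)⁻¹ := by
    simp [pinvc, Matrix.transpose_mul, Matrix.transpose_nonsing_inv]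
  rw [e, Matrix.mulVec_mulVec, Matrix.mulVec_mulVec, Matrix.mul_assoc, Matrix.mul_assoc,
    Matrix.nonsing_inv_mul _ hd, Matrix.mul_one]

/-- **Greedy-selection-ratio bound (eq. (17) of the paper).**  With `r̃ = (I - P_S)v`,
`r = r̃ + w̃`, if `A_nz` has linearly independent columns and `A_nzᵀ r̃ ≠ 0`, then
`A_nzᵀ r = A_nzᵀ r̃` and
`‖A_zᵀ r‖₂,∞ / ‖A_nzᵀ r‖₂,∞ ≤ ‖A_zᵀ (A_nz†)ᵀ‖₂,∞ + ‖A_zᵀ w̃‖₂,∞ / ‖A_nzᵀ r̃‖₂,∞`. -/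
theorem stmt4 {m L d K k : ℕ}
    (hm : m < L * d) (hd : 0 < d) (hK1 : 1 ≤ K) (hKL : K < L)
    (A : Matrix (Fin m) (Fin L × Fin d) ℝ)
    (hA : ∀ l j, e2norm (acol A l j) = 1)
    (x : Fin L × Fin d → ℝ)
    (I1 : Finset (Fin L))
    (hI1 : ∀ l, l ∈ I1 ↔ ∃ j, x (l, j) ≠ 0)
    (hcard : I1.card = K)
    (y w : Fin m → ℝ) (hy : y = A *ᵥ x + w)
    (wt : Fin m → ℝ)
    (hwt1 : ∃ c : Fin L → Fin d → ℝ, ∀ i, w i - wt i = ∑ l ∈ I1, ∑ j, A i (l, j) * c l j)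
    (hwt2 : ∀ l ∈ I1, ∀ j, dotp (acol A l j) wt = 0)
    (xt : Fin L → Fin d → ℝ)
    (hxt1 : ∀ i, (∑ l ∈ I1, ∑ j, A i (l, j) * xt l j) = y i - wt i)
    (hxt2 : ∃ u : Fin m → ℝ, ∀ l ∈ I1, ∀ j, xt l j - x (l, j) = dotp (acol A l j) u)
    (S : Finset (Fin L)) (hS : S ⊆ I1) (hSk : S.card = k) (hk : k < K)
    (v : Fin m → ℝ) (hv : v = fun i => ∑ l ∈ I1 \ S, ∑ j, A i (l, j) * xt l j)
    (PSv : Fin m → ℝ)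
    (hPSv1 : ∃ c : Fin L → Fin d → ℝ, ∀ i, PSv i = ∑ l ∈ S, ∑ j, A i (l, j) * c l j)
    (hPSv2 : ∀ l ∈ S, ∀ j, dotp (acol A l j) (fun i => v i - PSv i) = 0)
    (rt : Fin m → ℝ) (hrt : rt = fun i => v i - PSv i)
    (r : Fin m → ℝ) (hr : r = fun i => rt i + wt i)
    (hind : LinearIndependent ℝ
      (fun c : {l : Fin L // l ∈ I1} × Fin d => fun i => Anz A I1 i c))
    (hne : (Anz A I1)ᵀ *ᵥ rt ≠ 0) :
    ((Anz A I1)ᵀ *ᵥ r = (Anz A I1)ᵀ *ᵥ rt) ∧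
      bnorm2inf ((Az A I1)ᵀ *ᵥ r) / bnorm2inf ((Anz A I1)ᵀ *ᵥ r) ≤
        bOpNorm ((Az A I1)ᵀ * (pinvc (Anz A I1))ᵀ) +
          bnorm2inf ((Az A I1)ᵀ *ᵥ wt) / bnorm2inf ((Anz A I1)ᵀ *ᵥ rt) := by
  have h1 : (Anz A I1)ᵀ *ᵥ wt = 0 := by
    funext c
    exact hwt2 c.1.1 c.1.2 c.2
  have hr' : r = rt + wt := hr
  have h2 : (Anz A I1)ᵀ *ᵥ r = (Anz A I1)ᵀ *ᵥ rt := by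
    rw [hr', Matrix.mulVec_add, h1, add_zero]
  refine ⟨h2, ?_⟩
  obtain ⟨c, hc⟩ := hPSv1
  have h3 : rt = Anz A I1 *ᵥ
      (fun p => if p.1.1 ∈ S then - c p.1.1 p.2 else xt p.1.1 p.2) := by
    funext i
    have e : (Anz A I1 *ᵥ (fun p => if p.1.1 ∈ S then - c p.1.1 p.2 else xt p.1.1 p.2)) i
        = ∑ l ∈ I1, ∑ j, A i (l, j) * (if l ∈ S then - c l j else xt l j) := by
      rw [← Finset.sum_coe_sort I1]
      simp only [Matrix.mulVec, dotProduct, Fintype.sum_prod_type, Anz]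
    rw [e, ← Finset.sum_sdiff hS, hrt]
    simp only [hc, hv]
    rw [sub_eq_add_neg, ← Finset.sum_neg_distrib]
    congr 1
    · refine Finset.sum_congr rfl fun l hl => ?_
      simp [(Finset.mem_sdiff.1 hl).2]
    · refine Finset.sum_congr rfl fun l hl => ?_
      simp [hl]
  have h4 : (Az A I1)ᵀ *ᵥ rt =
      ((Az A I1)ᵀ * (pinvc (Anz A I1))ᵀ) *ᵥ ((Anz A I1)ᵀ *ᵥ rt) := by
    rw [← Matrix.mulVec_mulVec]
    congr 1
    rw [h3]
    exact (pinvc_fix _ hind _).symm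
  have h5 := bn_div_le ((Az A I1)ᵀ * (pinvc (Anz A I1))ᵀ) _ hne
  rw [← h4] at h5
  rw [h2, hr', Matrix.mulVec_add]
  calc _ ≤ (bnorm2inf ((Az A I1)ᵀ *ᵥ rt) + bnorm2inf ((Az A I1)ᵀ *ᵥ wt)) /
        bnorm2inf ((Anz A I1)ᵀ *ᵥ rt) :=
        div_le_div_of_nonneg_right (bn_add _ _) (bn_nonneg _)
    _ ≤ _ := by
        rw [add_div]
        exact add_le_add h5 le_rfl
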